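/- For m ≥ 1 let u^m : ℝ → ℝ be the sawtooth function with u^m(x) = 0 for x ∉ [0,1], u^m(x) = x − (i−1)/m for (i−1)/m ≤ x ≤ (2i−1)/(2m) and u^m(x) = i/m − x for (2i−1)/(2m) ≤ x ≤ i/m (i = 1,…,m). Assume κ₀ ≥ 1. Then for all m < n and every transportation plan (ψ,φ₁,φ₂) for the pair (u^m, u^n), the cost satisfies J^{(ψ,φ₁,φ₂)}(u^m, u^n) ≥ (n−m)/(8n). Consequently J(u^m, u^n) ≥ (n−m)/(8n), and for each fixed m this lower bound tends to 1/8 as n → ∞, so (u^m)_{m≥1} is not a Cauchy sequence with respect to the distance J. -/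

import Mathlib

open MeasureTheory Real

/-- The distance on `X = (ℝ² × (-π/2, π/2]) ∪ {∞}`. -/
noncomputable def dX (κ : ℝ) : Option (ℝ × ℝ × ℝ) → Option (ℝ × ℝ × ℝ) → ℝ
  | none, none => 0
  | none, some q => κ * (π / 2 + q.2.2)
  | some p, none => κ * (π / 2 + p.2.2)
  | some p, some q =>
      min (|p.1 - q.1| + |p.2.1 - q.2.1| + κ * |p.2.2 - q.2.2|)
        (κ * (π / 2 + p.2.2) + κ * (π / 2 + q.2.2))

/-- A transportation plan `(ψ, ψ', φ₁, φ₂)` between functions with derivatives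
`ux` and `vx`: `ψ` is a nondecreasing absolutely continuous surjection with a.e.
derivative `dψ ≥ 0`, `φ₁, φ₂ : ℝ → [0,1]` are simple Borel functions, and
`φ₁(x) ux(x)² = ψ'(x) φ₂(ψ(x)) vx(ψ(x))²` a.e. -/
def IsTransportPlan (ux vx ψ dψ φ₁ φ₂ : ℝ → ℝ) : Prop :=
  Monotone ψ ∧ Function.Surjective ψ ∧
  (∀ a b : ℝ, a ≤ b → ψ b - ψ a = ∫ x in a..b, dψ x) ∧
  (∀ x : ℝ, 0 ≤ dψ x) ∧
  (∀ x : ℝ, φ₁ x ∈ Set.Icc (0 : ℝ) 1) ∧ (∀ x : ℝ, φ₂ x ∈ Set.Icc (0 : ℝ) 1) ∧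
  (Set.range φ₁).Finite ∧ Measurable φ₁ ∧
  (Set.range φ₂).Finite ∧ Measurable φ₂ ∧
  (∀ᵐ x : ℝ, φ₁ x * (ux x) ^ 2 = dψ x * (φ₂ (ψ x) * (vx (ψ x)) ^ 2))

/-- The cost of a transportation plan. -/
noncomputable def planCost (κ : ℝ) (u ux v vx ψ dψ φ₁ φ₂ : ℝ → ℝ) : ℝ :=
  (∫ x : ℝ, dX κ (some (x, u x, arctan (ux x)))
      (some (ψ x, v (ψ x), arctan (vx (ψ x)))) * (φ₁ x * (ux x) ^ 2)) +
  (∫ x : ℝ, dX κ (some (x, u x, arctan (ux x))) none * ((1 - φ₁ x) * (ux x) ^ 2)) +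
  (∫ x : ℝ, dX κ (some (ψ x, v (ψ x), arctan (vx (ψ x)))) none *
      ((1 - φ₂ (ψ x)) * (vx (ψ x)) ^ 2 * dψ x))

/-- The transportation distance `J(u,v)`: infimum of costs over all plans. -/
noncomputable def Jdist (κ : ℝ) (u ux v vx : ℝ → ℝ) : ℝ :=
  sInf {c : ℝ | ∃ ψ dψ φ₁ φ₂ : ℝ → ℝ,
    IsTransportPlan ux vx ψ dψ φ₁ φ₂ ∧ planCost κ u ux v vx ψ dψ φ₁ φ₂ = c}

/-- The sawtooth `u^m`, supported on `[0,1]`, with `m` teeth of height `1/(2m)`: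
`u^m(x) = dist(mx, ℤ)/m` on `[0,1]`. -/
noncomputable def sawtooth (m : ℕ) (x : ℝ) : ℝ :=
  if 0 ≤ x ∧ x ≤ 1 then |(m : ℝ) * x - (round ((m : ℝ) * x) : ℤ)| / m else 0

/-- Its derivative: `+1` on the rising parts, `-1` on the falling parts, `0` off `[0,1]`. -/
noncomputable def sawtooth' (m : ℕ) (x : ℝ) : ℝ :=
  if 0 ≤ x ∧ x ≤ 1 then (if Int.fract ((m : ℝ) * x) < 1 / 2 then 1 else -1) else 0

lemma dX_none_nonneg (κ : ℝ) (hκ : 1 ≤ κ) (a b w : ℝ) :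
    0 ≤ dX κ (some (a, b, arctan w)) none := by
  have := neg_pi_div_two_lt_arctan w
  simp only [dX]
  apply mul_nonneg <;> linarith

lemma dX_nonneg (κ : ℝ) (hκ : 1 ≤ κ) (a b w a' b' w' : ℝ) :
    0 ≤ dX κ (some (a, b, arctan w)) (some (a', b', arctan w')) := by
  have h1 := dX_none_nonneg κ hκ a b w
  have h2 := dX_none_nonneg κ hκ a' b' w'
  simp only [dX] at *
  apply le_min <;> positivity

lemma dX_le (κ : ℝ) (hκ : 1 ≤ κ) (a b w a' b' w' : ℝ) :
    dX κ (some (a, b, arctan w)) (some (a', b', arctan w')) ≤ κ * π + κ * π := by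
  have h1 := arctan_lt_pi_div_two w
  have h2 := arctan_lt_pi_div_two w'
  simp only [dX]
  refine (min_le_right _ _).trans ?_
  gcongr <;> linarith

lemma dX_none_le (κ : ℝ) (hκ : 1 ≤ κ) (a b w : ℝ) :
    dX κ (some (a, b, arctan w)) none ≤ κ * π := by
  have h1 := arctan_lt_pi_div_two w
  simp only [dX]
  gcongr; linarith

lemma saw'_cases (m : ℕ) (x : ℝ) :
    sawtooth' m x = 0 ∨ sawtooth' m x = 1 ∨ sawtooth' m x = -1 := by
  unfold sawtooth'; split_ifs <;> simp

lemma measurable_saw' (m : ℕ) : Measurable (sawtooth' m) := by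
  unfold sawtooth'
  have h0 : MeasurableSet {x : ℝ | 0 ≤ x ∧ x ≤ 1} := measurableSet_Icc
  refine Measurable.ite h0 (Measurable.ite ?_ measurable_const measurable_const) measurable_const
  exact measurableSet_lt (measurable_fract.comp (measurable_const.mul measurable_id)) measurable_const

lemma measurable_saw (m : ℕ) : Measurable (sawtooth m) := by
  unfold sawtooth
  have h0 : MeasurableSet {x : ℝ | 0 ≤ x ∧ x ≤ 1} := measurableSet_Icc
  refine Measurable.ite h0 ?_ measurable_const
  have : (fun x : ℝ => |(m : ℝ) * x - (round ((m : ℝ) * x) : ℤ)| / m) =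
      fun x : ℝ => |(m : ℝ) * x - (⌊(m : ℝ) * x + 1 / 2⌋ : ℤ)| / m := by
    ext x; rw [round_eq]
  rw [this]
  have h1 : Measurable fun x : ℝ => ((⌊(m : ℝ) * x + 1 / 2⌋ : ℤ) : ℝ) :=
    (measurable_from_top (f := fun z : ℤ => (z : ℝ))).comp
      (Int.measurable_floor.comp ((measurable_const.mul measurable_id).add measurable_const))
  exact (((measurable_const.mul measurable_id).sub h1).abs).div_const _

/-- Pointwise lower bound where slopes do not match. -/
lemma pointwise (κ : ℝ) (hκ : 1 ≤ κ) (a b p a' b' s f g D : ℝ)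
    (hp : p = 0 ∨ p = 1 ∨ p = -1) (hs : s = 1 ∨ s = -1) (hps : p ≠ s)
    (hD : 0 ≤ D) (hg : g ∈ Set.Icc (0 : ℝ) 1)
    (he : f * p ^ 2 = D * (g * s ^ 2)) :
    π / 4 * D ≤ dX κ (some (a, b, arctan p)) (some (a', b', arctan s)) * (f * p ^ 2) +
      dX κ (some (a', b', arctan s)) none * ((1 - g) * s ^ 2 * D) := by
  have hpi := pi_pos
  obtain ⟨hg0, hg1⟩ := hg
  have hs2 : s ^ 2 = 1 := by rcases hs with h | h <;> rw [h] <;> norm_num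
  have hn : π / 4 ≤ dX κ (some (a', b', arctan s)) none := by
    simp only [dX]
    rcases hs with h | h <;> rw [h] <;> simp only [arctan_neg, arctan_one] <;> nlinarith
  rw [he, hs2]
  have hgD : 0 ≤ D * g := by positivity
  have hgD' : 0 ≤ (1 - g) * D := mul_nonneg (by linarith) hD
  by_cases h0 : p = 0
  · have : D * g = 0 := by rw [h0, hs2] at he; linarith
    rw [mul_one, this]
    nlinarith
  · have hd : π / 4 ≤ dX κ (some (a, b, arctan p)) (some (a', b', arctan s)) := by
      have e1 := abs_nonneg (a - a')
      have e2 := abs_nonneg (b - b')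
      have e3 : |arctan p - arctan s| = π / 2 := by
        rcases hp with h | h | h
        · exact absurd h h0
        · rcases hs with h' | h'
          · exact absurd (h.trans h'.symm) hps
          · rw [h, h', arctan_neg, arctan_one, abs_of_nonneg] <;> linarith
        · rcases hs with h' | h'
          · rw [h, h', arctan_neg, arctan_one, abs_of_nonpos] <;> linarith
          · exact absurd (h.trans h'.symm) hps
      have e4 := dX_none_nonneg κ hκ a b p
      simp only [dX] at *
      apply le_min
      · rw [e3]; nlinarith
      · linarith
    nlinarith

/-- Between a rising point and a later falling point there is a peak. -/
lemma exists_peak (m : ℕ) (x y : ℝ) (hxy : x < y) (hx : sawtooth' m x = 1)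
    (hy : sawtooth' m y = -1) :
    ∃ k : ℕ, k < m ∧ x < (2 * k + 1) / (2 * m) ∧ ((2 * k + 1) / (2 * m) : ℝ) ≤ y := by
  unfold sawtooth' at hx hy
  have hx' : (0 ≤ x ∧ x ≤ 1) ∧ Int.fract ((m : ℝ) * x) < 1 / 2 := by
    split_ifs at hx with h1 h2
    · exact ⟨h1, h2⟩
    · norm_num at hx
    · norm_num at hx
  have hy' : (0 ≤ y ∧ y ≤ 1) ∧ 1 / 2 ≤ Int.fract ((m : ℝ) * y) := by
    split_ifs at hy with h1 h2
    · norm_num at hy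
    · exact ⟨h1, not_lt.mp h2⟩
    · norm_num at hy
  obtain ⟨⟨hx0, hx1⟩, hxf⟩ := hx'
  obtain ⟨⟨hy0, hy1⟩, hyf⟩ := hy'
  have hm0 : (0 : ℝ) ≤ m := Nat.cast_nonneg m
  have hmy : 0 ≤ (m : ℝ) * y := by positivity
  have hk : ((⌊(m : ℝ) * y⌋₊ : ℕ) : ℝ) + 1 / 2 ≤ m * y := by
    have h := Int.floor_add_fract ((m : ℝ) * y)
    rw [← natCast_floor_eq_intCast_floor hmy] at h
    linarith
  have hk2 := Nat.lt_floor_add_one ((m : ℝ) * y)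
  set k := ⌊(m : ℝ) * y⌋₊
  have hkm' : (k : ℝ) < m := by nlinarith
  have hkm : k < m := by exact_mod_cast hkm'
  have hmpos : (0 : ℝ) < m := lt_of_le_of_lt (Nat.cast_nonneg k) hkm'
  refine ⟨k, hkm, ?_, ?_⟩
  · rw [lt_div_iff₀ (by positivity)]
    by_contra hc
    push Not at hc
    have hxy' : (m : ℝ) * x < m * y := by gcongr
    have : ⌊(m : ℝ) * x⌋ = (k : ℤ) := by
      rw [Int.floor_eq_iff]; push_cast
      constructor <;> linarith
    have h := Int.floor_add_fract ((m : ℝ) * x)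
    rw [this] at h
    push_cast at h
    linarith
  · rw [div_le_iff₀ (by positivity)]
    linarith

lemma saw'_rise (n i : ℕ) (hi : i < n) (y : ℝ) (h1 : (i / n : ℝ) ≤ y)
    (h2 : y < (2 * i + 1) / (2 * n)) : sawtooth' n y = 1 := by
  have hn : (0 : ℝ) < n := by exact_mod_cast (Nat.zero_le i).trans_lt hi
  have hi' : (i : ℝ) + 1 ≤ n := by exact_mod_cast hi
  rw [div_le_iff₀ hn] at h1
  rw [lt_div_iff₀ (by positivity)] at h2
  have hf : ⌊(n : ℝ) * y⌋ = (i : ℤ) := by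
    rw [Int.floor_eq_iff]; push_cast
    constructor <;> linarith
  have h := Int.floor_add_fract ((n : ℝ) * y)
  rw [hf] at h
  push_cast at h
  have hi0 : (0 : ℝ) ≤ i := Nat.cast_nonneg i
  unfold sawtooth'
  rw [if_pos ⟨by by_contra hc; push Not at hc; nlinarith, by by_contra hc; push Not at hc; nlinarith⟩,
    if_pos (by linarith)]

lemma saw'_fall (n i : ℕ) (hi : i < n) (y : ℝ) (h1 : ((2 * i + 1) / (2 * n) : ℝ) ≤ y)
    (h2 : y < ((i + 1 : ℕ) / n : ℝ)) : sawtooth' n y = -1 := by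
  have hn : (0 : ℝ) < n := by exact_mod_cast (Nat.zero_le i).trans_lt hi
  have hi' : (i : ℝ) + 1 ≤ n := by exact_mod_cast hi
  rw [div_le_iff₀ (by positivity)] at h1
  rw [lt_div_iff₀ hn] at h2
  push_cast at h2
  have hf : ⌊(n : ℝ) * y⌋ = (i : ℤ) := by
    rw [Int.floor_eq_iff]; push_cast
    constructor <;> linarith
  have h := Int.floor_add_fract ((n : ℝ) * y)
  rw [hf] at h
  push_cast at h
  have hi0 : (0 : ℝ) ≤ i := Nat.cast_nonneg i
  unfold sawtooth'
  rw [if_pos ⟨by by_contra hc; push Not at hc; nlinarith, by by_contra hc; push Not at hc; nlinarith⟩,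
    if_neg (by linarith)]

/-- Least preimages. -/
lemma exists_least (ψ : ℝ → ℝ) (hm : Monotone ψ) (hs : Function.Surjective ψ) (y : ℝ) :
    ∃ c, ψ c = y ∧ ∀ x, x < c → ψ x < y := by
  have hc : Continuous ψ := hm.continuous_of_surjective hs
  have hcl : IsClosed (ψ ⁻¹' {y}) := isClosed_singleton.preimage hc
  have hne : (ψ ⁻¹' {y}).Nonempty := hs y
  have hb : BddBelow (ψ ⁻¹' {y}) := by
    obtain ⟨l, hl⟩ := hs (y - 1)
    refine ⟨l, fun x hx => ?_⟩
    by_contra hlt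
    push Not at hlt
    have := hm hlt.le
    rw [hl, hx] at this
    linarith
  refine ⟨sInf (ψ ⁻¹' {y}), hcl.csInf_mem hne hb, fun x hx => ?_⟩
  have h1 : ψ x ≤ y := (hm hx.le).trans_eq (hcl.csInf_mem hne hb)
  refine lt_of_le_of_ne h1 fun h => ?_
  exact absurd (csInf_le hb h) (not_le.mpr hx)

lemma dpsi_integrable (ψ dψ : ℝ → ℝ) (hm : Monotone ψ) (hs : Function.Surjective ψ)
    (hi : ∀ a b : ℝ, a ≤ b → ψ b - ψ a = ∫ x in a..b, dψ x) (L R : ℝ) (hLR : L ≤ R) :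
    IntegrableOn dψ (Set.Icc L R) := by
  obtain ⟨R', hR'⟩ := hs (ψ R + 1)
  have hRR : R ≤ R' := by
    by_contra h
    push Not at h
    have := hm h.le
    linarith
  have h1 := hi L R' (hLR.trans hRR)
  have h2 := hm hLR
  by_contra hc
  have : ¬ IntervalIntegrable dψ volume L R' := by
    intro h
    rw [intervalIntegrable_iff_integrableOn_Icc_of_le (hLR.trans hRR)] at h
    exact hc (h.mono_set (Set.Icc_subset_Icc_right hRR))
  rw [intervalIntegral.integral_undef this] at h1
  linarith

lemma planCost_ge (κ : ℝ) (hκ : 1 ≤ κ) (m n : ℕ) (hm : 1 ≤ m) (hmn : m < n)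
    (ψ dψ φ₁ φ₂ : ℝ → ℝ)
    (h : IsTransportPlan (sawtooth' m) (sawtooth' n) ψ dψ φ₁ φ₂) :
    ((n : ℝ) - m) / (8 * n) ≤
      planCost κ (sawtooth m) (sawtooth' m) (sawtooth n) (sawtooth' n) ψ dψ φ₁ φ₂ := by
  obtain ⟨hmono, hsurj, hint, hd0, hφ1, hφ2, -, hm1, -, hm2, heq⟩ := h
  have hpi := pi_pos
  have hn : (0 : ℝ) < n := by exact_mod_cast (Nat.zero_le m).trans_lt hmn
  have hdi := dpsi_integrable ψ dψ hmono hsurj hint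
  have hψm : Measurable ψ := hmono.measurable
  have hu := measurable_saw m
  have hu' := measurable_saw' m
  have hv := (measurable_saw n).comp hψm
  have hv' := (measurable_saw' n).comp hψm
  simp only [Function.comp_def] at hv hv'
  unfold planCost
  set F1 : ℝ → ℝ := fun x => dX κ (some (x, sawtooth m x, arctan (sawtooth' m x)))
      (some (ψ x, sawtooth n (ψ x), arctan (sawtooth' n (ψ x)))) * (φ₁ x * (sawtooth' m x) ^ 2)
    with hF1
  set F3 : ℝ → ℝ := fun x =>
      dX κ (some (ψ x, sawtooth n (ψ x), arctan (sawtooth' n (ψ x)))) none *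
      ((1 - φ₂ (ψ x)) * (sawtooth' n (ψ x)) ^ 2 * dψ x) with hF3
  have hF1n : ∀ x, 0 ≤ F1 x := fun x =>
    mul_nonneg (dX_nonneg κ hκ _ _ _ _ _ _) (mul_nonneg (hφ1 x).1 (sq_nonneg _))
  have hF3n : ∀ x, 0 ≤ F3 x := fun x =>
    mul_nonneg (dX_none_nonneg κ hκ _ _ _)
      (mul_nonneg (mul_nonneg (by linarith [(hφ2 (ψ x)).2]) (sq_nonneg _)) (hd0 x))
  have hsq : ∀ (m : ℕ) x, (sawtooth' m x) ^ 2 ≤ 1 := fun m x => by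
    rcases saw'_cases m x with h | h | h <;> rw [h] <;> norm_num
  have hF1i : Integrable F1 := by
    have hsupp : Function.support F1 ⊆ Set.Icc 0 1 := by
      intro x hx
      by_contra hc
      apply hx
      have : sawtooth' m x = 0 := by unfold sawtooth'; exact if_neg hc
      simp [hF1, this]
    rw [← integrableOn_iff_integrable_of_support_subset hsupp]
    have hmeas : Measurable F1 := by
      simp only [hF1, dX]
      fun_prop
    refine Measure.integrableOn_of_bounded (M := (κ * π + κ * π) * 1) (by simp) hmeas.aestronglyMeasurable ?_
    refine Filter.Eventually.of_forall fun x => ?_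
    rw [Real.norm_of_nonneg (hF1n x)]
    refine mul_le_mul (dX_le κ hκ _ _ _ _ _ _) ?_ (mul_nonneg (hφ1 x).1 (sq_nonneg _)) (by positivity)
    exact mul_le_one₀ (hφ1 x).2 (sq_nonneg _) (hsq m x)
  have hF3i : Integrable F3 := by
    obtain ⟨L, hL⟩ := hsurj (-1)
    obtain ⟨R, hR⟩ := hsurj 2
    have hLR : L ≤ R := by
      by_contra h
      push Not at h
      have := hmono h.le
      linarith
    have hsupp : Function.support F3 ⊆ Set.Icc L R := by
      intro x hx
      by_contra hc
      apply hx
      have : sawtooth' n (ψ x) = 0 := by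
        unfold sawtooth'
        refine if_neg fun hh => hc ⟨?_, ?_⟩
        · by_contra h
          push Not at h
          have := hmono h.le
          linarith [hh.1]
        · by_contra h
          push Not at h
          have := hmono h.le
          linarith [hh.2]
      simp [hF3, this]
    rw [← integrableOn_iff_integrable_of_support_subset hsupp]
    have he : F3 = fun x => (dX κ (some (ψ x, sawtooth n (ψ x), arctan (sawtooth' n (ψ x)))) none *
      ((1 - φ₂ (ψ x)) * (sawtooth' n (ψ x)) ^ 2)) * dψ x := by
      ext x; simp only [hF3]; ring
    rw [he]
    have hmeas : Measurable (fun x => dX κ (some (ψ x, sawtooth n (ψ x), arctan (sawtooth' n (ψ x)))) none *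
      ((1 - φ₂ (ψ x)) * (sawtooth' n (ψ x)) ^ 2)) := by
      simp only [dX]
      fun_prop
    refine Integrable.bdd_mul (c := (κ * π) * 1) (hdi L R hLR) hmeas.aestronglyMeasurable ?_
    refine Filter.Eventually.of_forall fun x => ?_
    have h1 : 0 ≤ 1 - φ₂ (ψ x) := by linarith [(hφ2 (ψ x)).2]
    rw [Real.norm_of_nonneg (mul_nonneg (dX_none_nonneg κ hκ _ _ _) (mul_nonneg h1 (sq_nonneg _)))]
    refine mul_le_mul (dX_none_le κ hκ _ _ _) ?_ (mul_nonneg h1 (sq_nonneg _)) (by positivity)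
    exact mul_le_one₀ (by linarith [(hφ2 (ψ x)).1]) (sq_nonneg _) (hsq n (ψ x))
  have hI2 : 0 ≤ ∫ x : ℝ, dX κ (some (x, sawtooth m x, arctan (sawtooth' m x))) none *
      ((1 - φ₁ x) * (sawtooth' m x) ^ 2) :=
    integral_nonneg fun x => mul_nonneg (dX_none_nonneg κ hκ _ _ _)
      (mul_nonneg (by linarith [(hφ1 x).2]) (sq_nonneg _))
  have hadd := integral_add hF1i hF3i
  set F : ℝ → ℝ := fun x => F1 x + F3 x with hF
  have hFi : Integrable F := hF1i.add hF3i
  have hFn : ∀ x, 0 ≤ F x := fun x => add_nonneg (hF1n x) (hF3n x)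
  suffices hmain : π * ((n : ℝ) - m) / (8 * n) ≤ ∫ x, F x by
    have hle : ((n : ℝ) - m) / (8 * n) ≤ π * ((n : ℝ) - m) / (8 * n) := by
      have : (m : ℝ) < n := by exact_mod_cast hmn
      gcongr
      nlinarith [Real.pi_gt_three]
    linarith
  -- mismatch intervals
  have hmis : ∀ a b A s : ℝ, a ≤ b → ψ b - ψ a = A → (s = 1 ∨ s = -1) →
      (∀ x ∈ Set.Ioo a b, sawtooth' n (ψ x) = s) → (∀ x ∈ Set.Ioo a b, sawtooth' m x ≠ s) →
      π / 4 * A ≤ ∫ x in Set.Ioo a b, F x := by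
    intro a b A s hab hA hs h1 h2
    have : A = ∫ x in Set.Ioo a b, dψ x := by
      rw [← hA, hint a b hab, intervalIntegral.integral_of_le hab, integral_Ioc_eq_integral_Ioo]
    rw [this, ← integral_const_mul]
    refine setIntegral_mono_on_ae (((hdi a b hab).mono_set Set.Ioo_subset_Icc_self).const_mul _)
      hFi.integrableOn measurableSet_Ioo ?_
    filter_upwards [heq] with x hx hxab
    have e1 := h1 x hxab
    have e2 := h2 x hxab
    exact pointwise κ hκ _ _ _ _ _ _ _ _ _ (saw'_cases m x) (by rw [e1]; exact hs)
      (by rw [e1]; exact e2) (hd0 x) (hφ2 _) hx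
  choose c hc1 hc2 using exists_least ψ hmono hsurj
  have hcm : ∀ y z, y ≤ z → c y ≤ c z := by
    intro y z hyz
    by_contra h
    push Not at h
    have := hc2 y _ h
    rw [hc1] at this
    linarith
  have hcm' : Monotone (fun i : ℕ => c ((i : ℝ) / n)) := by
    intro i j hij
    apply hcm
    gcongr
  set A : ℕ → Set ℝ := fun i => Set.Ioo (c ((i : ℝ) / n)) (c (((i + 1 : ℕ) : ℝ) / n)) with hAdef
  have hdisj : Pairwise (Function.onFun Disjoint A) := hcm'.pairwise_disjoint_on_Ioo_succ
  have htooth : ∀ i < n, (∀ k < m, ((2 * k + 1) / (2 * m) : ℝ) ∉ A i) →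
      π / (8 * n) ≤ ∫ x in A i, F x := by
    intro i hi hk
    have hl1 : (i / n : ℝ) ≤ (2 * i + 1) / (2 * n) := by
      rw [div_le_div_iff₀ hn (by positivity)]; nlinarith
    have hl2 : ((2 * i + 1) / (2 * n) : ℝ) ≤ ((i + 1 : ℕ) : ℝ) / n := by
      rw [div_le_div_iff₀ (by positivity) hn]; push_cast; nlinarith
    have g1 := hcm _ _ hl1
    have g2 := hcm _ _ hl2
    set a := c (i / n : ℝ) with ha
    set d := c ((2 * i + 1) / (2 * n) : ℝ) with hdd
    set b := c (((i + 1 : ℕ) : ℝ) / n) with hb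
    have hr : ∀ x ∈ Set.Ioo a d, sawtooth' n (ψ x) = 1 := by
      intro x hx
      refine saw'_rise n i hi _ ?_ (hc2 _ _ hx.2)
      rw [← hc1 (i / n : ℝ)]; exact hmono hx.1.le
    have hf : ∀ x ∈ Set.Ioo d b, sawtooth' n (ψ x) = -1 := by
      intro x hx
      refine saw'_fall n i hi _ ?_ (hc2 _ _ hx.2)
      rw [← hc1 ((2 * i + 1) / (2 * n) : ℝ)]; exact hmono hx.1.le
    have hsub : ∀ s ⊆ A i, ∫ x in s, F x ≤ ∫ x in A i, F x := fun s hs =>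
      setIntegral_mono_set hFi.integrableOn (Filter.Eventually.of_forall hFn)
        (Filter.Eventually.of_forall hs)
    have hval : π / (8 * n) = π / 4 * (1 / (2 * n)) := by field_simp; norm_num
    rw [hval]
    by_cases hx : ∀ x ∈ Set.Ioo a d, sawtooth' m x ≠ 1
    · refine (hmis a d _ 1 g1 ?_ (Or.inl rfl) hr hx).trans (hsub _ (Set.Ioo_subset_Ioo_right g2))
      rw [hc1, hc1]; field_simp; ring
    · refine (hmis d b _ (-1) g2 ?_ (Or.inr rfl) hf ?_).trans (hsub _ (Set.Ioo_subset_Ioo_left g1))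
      · rw [hc1, hc1]; push_cast; field_simp; ring
      · intro y hy hy1
        push Not at hx
        obtain ⟨x, hx, hx1⟩ := hx
        obtain ⟨k, hkm, hk1, hk2⟩ := exists_peak m x y (hx.2.trans hy.1) hx1 hy1
        exact hk k hkm ⟨hx.1.trans hk1, hk2.trans_lt hy.2⟩
  classical
  set B := (Finset.range n).filter (fun i => ∃ k < m, ((2 * k + 1) / (2 * m) : ℝ) ∈ A i) with hB
  have hBcard : B.card ≤ m := by
    have hex : ∀ i : ℕ, ∃ k : ℕ, i ∈ B → k < m ∧ ((2 * k + 1) / (2 * m) : ℝ) ∈ A i := by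
      intro i
      by_cases hi : i ∈ B
      · obtain ⟨k, hk⟩ := (Finset.mem_filter.mp hi).2
        exact ⟨k, fun _ => hk⟩
      · exact ⟨0, fun h => absurd h hi⟩
    choose f hf using hex
    have := Finset.card_le_card_of_injOn (s := B) (t := Finset.range m) f
      (fun i hi => Finset.mem_coe.mpr (Finset.mem_range.mpr (hf i hi).1)) (by
        intro i hi j hj hij
        by_contra hne
        have h1 := (hf i hi).2
        have h2 := (hf j hj).2
        rw [hij] at h1
        exact Set.disjoint_left.mp (hdisj hne) h1 h2)
    simpa using this
  set G := Finset.range n \ B with hG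
  have hGcard : (n : ℝ) - m ≤ (G.card : ℝ) := by
    have h1 : G.card + B.card = n := by
      rw [hG, Finset.card_sdiff_add_card_eq_card (Finset.filter_subset _ _), Finset.card_range]
    have h2 : n ≤ G.card + m := by omega
    have h3 : (n : ℝ) ≤ G.card + m := by exact_mod_cast h2
    linarith
  calc π * ((n : ℝ) - m) / (8 * n) = ((n : ℝ) - m) * (π / (8 * n)) := by ring
    _ ≤ G.card * (π / (8 * n)) := by gcongr
    _ = ∑ i ∈ G, π / (8 * n) := by rw [Finset.sum_const, nsmul_eq_mul]
    _ ≤ ∑ i ∈ G, ∫ x in A i, F x := by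
        refine Finset.sum_le_sum fun i hi => ?_
        rw [hG, Finset.mem_sdiff, hB, Finset.mem_filter] at hi
        refine htooth i (Finset.mem_range.mp hi.1) fun k hk hkA => hi.2 ⟨hi.1, k, hk, hkA⟩
    _ = ∫ x in ⋃ i ∈ G, A i, F x :=
        (integral_biUnion_finset G (fun i _ => measurableSet_Ioo)
          (fun i _ j _ hij => hdisj hij) (fun i _ => hFi.integrableOn)).symm
    _ ≤ ∫ x, F x := setIntegral_le_integral hFi (Filter.Eventually.of_forall hFn)

lemma Jdist_ge (κ : ℝ) (hκ : 1 ≤ κ) (m n : ℕ) (hm : 1 ≤ m) (hmn : m < n) :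
    ((n : ℝ) - m) / (8 * n) ≤
      Jdist κ (sawtooth m) (sawtooth' m) (sawtooth n) (sawtooth' n) := by
  unfold Jdist
  apply le_csInf
  · refine ⟨_, id, fun _ => 1, fun _ => 0, fun _ => 0, ?_, rfl⟩
    refine ⟨monotone_id, Function.surjective_id, ?_, ?_, ?_, ?_, ?_, ?_, ?_, ?_, ?_⟩ <;>
      simp [Set.finite_singleton]
  · rintro _ ⟨ψ, dψ, φ₁, φ₂, h, rfl⟩
    exact planCost_ge κ hκ m n hm hmn ψ dψ φ₁ φ₂ h

/-- Example 2: for `κ₀ ≥ 1` and `m < n`, every transportation plan between `u^m` and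
`u^n` has cost at least `(n-m)/(8n)`; hence `J(u^m, u^n) ≥ (n-m)/(8n)`, which for fixed
`m` tends to `1/8` as `n → ∞`, so the sawtooth functions `(u^m)` do not form a Cauchy
sequence with respect to the transportation distance `J`. -/
theorem sawtooth_not_cauchy (κ : ℝ) (hκ : 1 ≤ κ) :
    (∀ m n : ℕ, 1 ≤ m → m < n → ∀ ψ dψ φ₁ φ₂ : ℝ → ℝ,
      IsTransportPlan (sawtooth' m) (sawtooth' n) ψ dψ φ₁ φ₂ →
        ((n : ℝ) - m) / (8 * n) ≤
          planCost κ (sawtooth m) (sawtooth' m) (sawtooth n) (sawtooth' n) ψ dψ φ₁ φ₂) ∧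
    (∀ m n : ℕ, 1 ≤ m → m < n →
      ((n : ℝ) - m) / (8 * n) ≤
        Jdist κ (sawtooth m) (sawtooth' m) (sawtooth n) (sawtooth' n)) ∧
    (∀ m : ℕ, 1 ≤ m →
      Filter.Tendsto (fun n : ℕ => ((n : ℝ) - m) / (8 * n)) Filter.atTop
        (nhds (1 / 8))) ∧
    ¬ (∀ ε : ℝ, 0 < ε → ∃ N : ℕ, ∀ m n : ℕ, N ≤ m → N ≤ n →
        Jdist κ (sawtooth m) (sawtooth' m) (sawtooth n) (sawtooth' n) < ε) := by
  refine ⟨fun m n hm hmn ψ dψ φ₁ φ₂ h => planCost_ge κ hκ m n hm hmn ψ dψ φ₁ φ₂ h,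
    fun m n hm hmn => Jdist_ge κ hκ m n hm hmn, ?_, ?_⟩
  · intro m hm
    have h1 : Filter.Tendsto (fun n : ℕ => (1 / 8 : ℝ) - (m / 8 : ℝ) / (n : ℝ)) Filter.atTop
        (nhds (1 / 8 - 0)) :=
      tendsto_const_nhds.sub (tendsto_const_div_atTop_nhds_zero_nat _)
    rw [sub_zero] at h1
    refine h1.congr' ?_
    filter_upwards [Filter.eventually_gt_atTop 0] with n hn
    have : (n : ℝ) ≠ 0 := by positivity
    field_simp
  · intro h
    obtain ⟨N, hN⟩ := h (1 / 16) (by norm_num)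
    have h1 := hN (N + 1) (2 * (N + 1)) (by omega) (by omega)
    have h2 := Jdist_ge κ hκ (N + 1) (2 * (N + 1)) (by omega) (by omega)
    have h3 : (((2 * (N + 1) : ℕ) : ℝ) - ((N + 1 : ℕ) : ℝ)) / (8 * ((2 * (N + 1) : ℕ) : ℝ)) = 1 / 16 := by
      push_cast
      have : (N : ℝ) + 1 ≠ 0 := by positivity
      field_simp
      ring
    linarith
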